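/- arXiv:1608.06316 — 2 statements merged into one kernel-verified Lean document; each statement's English description precedes it below -/
import Mathlib

section
/- Every invertible (i.e., nowhere-vanishing) function f in C(𝕋²,ℂ) has the form f = χ_{m,n}·exp(g) for some g ∈ C(𝕋²,ℂ) and some (m,n) ∈ ℤ²; moreover the pair (m,n) (equivalently, the character χ_{m,n}) is uniquely determined by f. -/
/-!
Pull `f` back along the open quotient map `(s, t) ↦ (e^{is}, e^{it})` from the plane to the torus.
The plane is simply connected and `exp : ℂ → ℂ ∖ {0}` is a covering map, so the pullback has a
continuous logarithm `F`. The difference `F(s + 2π, t) - F(s, t)` is a continuous function whose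
exponential is `1`, hence a constant `2πi m` (`exists_int_of_exp_eq_one`), and likewise
`F(s, t + 2π) - F(s, t) = 2πi n`. So `F(s, t) - i(ms + nt)` is doubly periodic, descends to a
continuous `g` on the torus, and `f = χ_{m,n} exp g`.

For uniqueness, if `χ_{m,n} exp g = χ_{m',n'} exp g'`, then
`i(m - m')s + i(n - n')t + (g - g')(e^{is}, e^{it})` has exponential `1`, so it is constant;
comparing its values at `(0, 0)`, `(2π, 0)` and `(0, 2π)` gives equality of the two pairs of exponents.
-/

noncomputable section

/-- The character `χ_{m,n}` on the 2-torus, `χ_{m,n}(z,w) = z^m * w^n`. -/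
def chi (m n : ℤ) : C(Circle × Circle, ℂ) :=
  ⟨fun p => ((p.1 ^ m : Circle) : ℂ) * ((p.2 ^ n : Circle) : ℂ), by
    have h1 : Continuous fun p : Circle × Circle => p.1 ^ m :=
      (continuous_zpow m).comp continuous_fst
    have h2 : Continuous fun p : Circle × Circle => p.2 ^ n :=
      (continuous_zpow n).comp continuous_snd
    have hc : Continuous ((↑) : Circle → ℂ) := continuous_induced_dom
    exact (hc.comp h1).mul (hc.comp h2)⟩

/-- The universal covering `(s, t) ↦ (e^{is}, e^{it})` of the torus by the plane. -/
def torusExp : C(ℝ × ℝ, Circle × Circle) :=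
  Circle.exp.prodMap Circle.exp

lemma torusExp_apply (s t : ℝ) : torusExp (s, t) = (Circle.exp s, Circle.exp t) := rfl

lemma isQuotientMap_torusExp : Topology.IsQuotientMap torusExp := by
  have h : IsOpenQuotientMap Circle.exp :=
    ⟨Circle.isAddQuotientCoveringMap_exp.surjective, Circle.exp.continuous,
      Circle.isCoveringMap_exp.isLocalHomeomorph.isOpenMap⟩
  exact (h.prodMap h).isQuotientMap

lemma chi_torusExp (m n : ℤ) (s t : ℝ) :
    chi m n (torusExp (s, t)) = Complex.exp (Complex.I * (m * s + n * t)) := by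
  simp only [chi, torusExp_apply, ContinuousMap.coe_mk, Circle.coe_zpow, Circle.coe_exp]
  rw [← Complex.exp_int_mul, ← Complex.exp_int_mul, ← Complex.exp_add]
  congr 1
  ring

/-- A continuous function on a connected space with exponential `1` is a constant in `2πi ℤ`:
it and the constant function given by one of its values lift the same map through the covering
`exp`. -/
lemma exists_int_of_exp_eq_one {X : Type*} [TopologicalSpace X] [PreconnectedSpace X] [Nonempty X]
    {h : X → ℂ} (hc : Continuous h) (h1 : ∀ x, Complex.exp (h x) = 1) :
    ∃ k : ℤ, ∀ x, h x = k * (2 * Real.pi * Complex.I) := by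
  obtain ⟨x₀⟩ := ‹Nonempty X›
  obtain ⟨k, hk⟩ := Complex.exp_eq_one_iff.1 (h1 x₀)
  refine ⟨k, fun x => hk ▸ ?_⟩
  refine congrFun (Complex.isCoveringMap_exp.eq_of_comp_eq hc
    (continuous_const (y := h x₀)) ?_ x₀ rfl) x
  funext y
  simp [h1]

/-- A continuous function on the plane that is `2π`-periodic in each variable descends to the
torus. -/
lemma exists_descend (G : C(ℝ × ℝ, ℂ)) (h₁ : ∀ s t, G (s + 2 * Real.pi, t) = G (s, t))
    (h₂ : ∀ s t, G (s, t + 2 * Real.pi) = G (s, t)) :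
    ∃ g : C(Circle × Circle, ℂ), ∀ s t, g (torusExp (s, t)) = G (s, t) := by
  have key : Function.FactorsThrough G torusExp := by
    rintro ⟨s, t⟩ ⟨s', t'⟩ h
    rw [torusExp_apply, torusExp_apply, Prod.mk.injEq, Circle.exp_eq_exp, Circle.exp_eq_exp] at h
    obtain ⟨⟨a, rfl⟩, b, rfl⟩ := h
    have p₁ : ∀ t, Function.Periodic (fun s => G (s, t)) (2 * Real.pi) := fun t s => h₁ s t
    have p₂ : ∀ s, Function.Periodic (fun t => G (s, t)) (2 * Real.pi) := fun s t => h₂ s t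
    exact ((p₁ _).int_mul a s').trans ((p₂ _).int_mul b t')
  exact ⟨isQuotientMap_torusExp.lift G key, fun s t =>
    congrArg (fun φ : C(ℝ × ℝ, ℂ) => φ (s, t)) (isQuotientMap_torusExp.lift_comp G key)⟩

/-- A nowhere-vanishing function on the torus has a continuous logarithm on the plane. -/
lemma exists_log_lift (f : C(Circle × Circle, ℂ)) (hf : ∀ p, f p ≠ 0) :
    ∃ F : C(ℝ × ℝ, ℂ), ∀ x, Complex.exp (F x) = f (torusExp x) := by
  obtain ⟨F, ⟨-, hF⟩, -⟩ := Complex.isCoveringMapOn_exp.existsUnique_continuousMap_lifts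
    (f.comp torusExp) (a₀ := (0, 0)) (e₀ := Complex.log (f (torusExp (0, 0))))
    (Complex.exp_log (hf _)) (fun x => hf _)
  exact ⟨F, congrFun hF⟩

lemma exists_factorization (f : C(Circle × Circle, ℂ)) (hf : ∀ p, f p ≠ 0) :
    ∃ m n : ℤ, ∃ g : C(Circle × Circle, ℂ), ∀ p, f p = chi m n p * Complex.exp (g p) := by
  obtain ⟨F, hF⟩ := exists_log_lift f hf
  have e₁ : ∀ x : ℝ × ℝ, torusExp (x.1 + 2 * Real.pi, x.2) = torusExp x := fun x =>
    Prod.ext (Circle.periodic_exp x.1) rfl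
  have e₂ : ∀ x : ℝ × ℝ, torusExp (x.1, x.2 + 2 * Real.pi) = torusExp x := fun x =>
    Prod.ext rfl (Circle.periodic_exp x.2)
  obtain ⟨m, hm⟩ := exists_int_of_exp_eq_one
    (h := fun x : ℝ × ℝ => F (x.1 + 2 * Real.pi, x.2) - F x) (by fun_prop)
    (fun x => by rw [Complex.exp_sub, hF, hF, e₁, div_self (hf _)])
  obtain ⟨n, hn⟩ := exists_int_of_exp_eq_one
    (h := fun x : ℝ × ℝ => F (x.1, x.2 + 2 * Real.pi) - F x) (by fun_prop)
    (fun x => by rw [Complex.exp_sub, hF, hF, e₂, div_self (hf _)])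
  obtain ⟨g, hg⟩ := exists_descend
    ⟨fun x => F x - Complex.I * (m * x.1 + n * x.2), by fun_prop⟩
    (fun s t => by
      have := hm (s, t)
      simp only [ContinuousMap.coe_mk] at this ⊢
      push_cast
      linear_combination this)
    (fun s t => by
      have := hn (s, t)
      simp only [ContinuousMap.coe_mk] at this ⊢
      push_cast
      linear_combination this)
  refine ⟨m, n, g, fun p => ?_⟩
  obtain ⟨⟨s, t⟩, rfl⟩ := isQuotientMap_torusExp.surjective p
  rw [chi_torusExp, hg, ← Complex.exp_add, ← hF]
  simp

lemma factorization_unique {m n m' n' : ℤ} {g g' : C(Circle × Circle, ℂ)}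
    (h : ∀ p, chi m n p * Complex.exp (g p) = chi m' n' p * Complex.exp (g' p)) :
    m = m' ∧ n = n' := by
  obtain ⟨k, hk⟩ := exists_int_of_exp_eq_one
    (h := fun x : ℝ × ℝ => (Complex.I * (m * x.1 + n * x.2) + g (torusExp x)) -
      (Complex.I * (m' * x.1 + n' * x.2) + g' (torusExp x))) (by fun_prop)
    (fun x => by
      have := h (torusExp x)
      rw [← Prod.mk.eta (p := x), chi_torusExp, chi_torusExp, ← Complex.exp_add,
        ← Complex.exp_add] at this
      rw [Complex.exp_sub, this, div_self (Complex.exp_ne_zero _)])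
  have hpi : (2 * Real.pi * Complex.I : ℂ) ≠ 0 := Complex.two_pi_I_ne_zero
  have e₁ : torusExp (2 * Real.pi, 0) = torusExp (0, 0) :=
    Prod.ext (by simp [torusExp_apply]) rfl
  have e₂ : torusExp (0, 2 * Real.pi) = torusExp (0, 0) :=
    Prod.ext rfl (by simp [torusExp_apply])
  have h₀ := hk (0, 0)
  have h₁ := hk (2 * Real.pi, 0)
  have h₂ := hk (0, 2 * Real.pi)
  simp only [e₁, e₂] at h₀ h₁ h₂
  push_cast at h₀ h₁ h₂
  constructor
  · have : (m : ℂ) = m' := mul_right_cancel₀ hpi (by linear_combination h₁ - h₀)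
    exact_mod_cast this
  · have : (n : ℂ) = n' := mul_right_cancel₀ hpi (by linear_combination h₂ - h₀)
    exact_mod_cast this

/-- Every invertible (nowhere-vanishing) `f ∈ C(𝕋²,ℂ)` has the form
`f = χ_{m,n} ⬝ exp g` for some `g ∈ C(𝕋²,ℂ)`, and the pair `(m,n)` is uniquely
determined by `f`. -/
theorem exists_unique_char_factorization_of_invertible
    (f : C(Circle × Circle, ℂ)) (hf : ∀ p : Circle × Circle, f p ≠ 0) :
    ∃! mn : ℤ × ℤ, ∃ g : C(Circle × Circle, ℂ),
      ∀ p : Circle × Circle, f p = chi mn.1 mn.2 p * Complex.exp (g p) := by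
  obtain ⟨m, n, g, hg⟩ := exists_factorization f hf
  refine ⟨(m, n), ⟨g, hg⟩, ?_⟩
  rintro ⟨m', n'⟩ ⟨g', hg'⟩
  obtain ⟨rfl, rfl⟩ := factorization_unique fun p => (hg' p).symm.trans (hg p)
  rfl
end
end

section
/- Let α be a positive irrational real number and let (p_n), (q_n) be sequences of positive integers with p_n/q_n → α. Define positive linear functionals μ_n on C(𝕋²,ℂ) by μ_n(f) = (1/2π)∫_{-π}^{π} f(e^{i q_n θ}, e^{i p_n θ}) dθ. Then μ_n converges to μ in the weak* topology; that is, for every f ∈ C(𝕋²,ℂ), μ_n(f) → ∫_{𝕋²} f dμ. -/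
/-!
Equidistribution by Weyl's criterion. Both the averages over the curves
`θ ↦ (e^{i q_n θ}, e^{i p_n θ})` and the Haar integral are linear functionals on `C(𝕋², ℂ)` of
norm at most one (`norm_curveAvg_le`, `norm_integral_haarT2_le`), and the trigonometric polynomials
are dense by Stone–Weierstrass (`trigSubalgebra_closure`), so convergence needs checking only on
the characters `χ_{a,b}`.

The trivial character has average and integral `1`. A nontrivial one has Haar integral `0`, and
its average over the `n`-th curve is the mean of `e^{i k θ}` with `k = q_n a + p_n b`, which
vanishes as soon as `k ≠ 0`. Since `k / q_n → a + α b` and this limit is nonzero by the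
irrationality of `α`, `k ≠ 0` for all large `n` (`eventually_freq_ne_zero`).
-/


open MeasureTheory

noncomputable section

/-- Borel measurable structure on the circle group `𝕋`. -/
instance : MeasurableSpace Circle := borel Circle
instance : BorelSpace Circle := ⟨rfl⟩

/-- The normalized Haar (Lebesgue) measure `μ` on the 2-torus `𝕋² = 𝕋 × 𝕋`. -/
def haarT2 : Measure (Circle × Circle) :=
  Measure.haarMeasure ⟨⟨Set.univ, isCompact_univ⟩, by simp⟩

/-- The Fourier coefficient `f̂(m,n) = ∫_{𝕋²} f(z,w) z^{-m} w^{-n} dμ(z,w)`. -/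
def fourierCoef (f : C(Circle × Circle, ℂ)) (m n : ℤ) : ℂ :=
  ∫ p, f p * chi (-m) (-n) p ∂haarT2

/-- The uniform algebra `𝒜_α ⊆ C(𝕋²,ℂ)`, as a set: those continuous functions whose
Fourier coefficients `f̂(m,n)` vanish whenever `m + α n < 0`. -/
def Aset (α : ℝ) : Set C(Circle × Circle, ℂ) :=
  {f | ∀ m n : ℤ, (m : ℝ) + α * n < 0 → fourierCoef f m n = 0}

section Helpers

open Filter


instance haarT2_isProbabilityMeasure : IsProbabilityMeasure haarT2 :=
  ⟨by
    unfold haarT2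
    exact Measure.haarMeasure_self⟩

instance haarT2_isMulLeftInvariant : haarT2.IsMulLeftInvariant := by
  unfold haarT2
  infer_instance

lemma chi_apply (m n : ℤ) (x : Circle × Circle) :
    chi m n x = ((x.1 ^ m : Circle) : ℂ) * ((x.2 ^ n : Circle) : ℂ) := rfl

lemma chi_zero : chi 0 0 = 1 := by
  ext x
  simp [chi_apply]

lemma chi_mul (m n m' n' : ℤ) : chi m n * chi m' n' = chi (m + m') (n + n') := by
  ext x
  simp only [ContinuousMap.mul_apply, chi_apply, zpow_add, Circle.coe_mul]
  ring

lemma star_chi (m n : ℤ) : star (chi m n) = chi (-m) (-n) := by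
  ext x
  simp only [ContinuousMap.star_apply, chi_apply, zpow_neg, Circle.coe_inv_eq_conj, star_mul']
  rfl

lemma chi_mul_point (m n : ℤ) (g x : Circle × Circle) :
    chi m n (g * x) = chi m n g * chi m n x := by
  simp only [chi_apply, Prod.fst_mul, Prod.snd_mul, mul_zpow, Circle.coe_mul]
  ring

lemma exists_chi_eq_neg_one {m n : ℤ} (h : ¬(m = 0 ∧ n = 0)) :
    ∃ g, chi m n g = -1 := by
  by_cases hm : m = 0
  · have hn : (n : ℝ) ≠ 0 := by exact_mod_cast fun hn => h ⟨hm, hn⟩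
    refine ⟨(1, Circle.exp (Real.pi / n)), ?_⟩
    simp [chi_apply, ← Circle.exp_zsmul, mul_div_cancel₀ _ hn]
  · have hm' : (m : ℝ) ≠ 0 := by exact_mod_cast hm
    refine ⟨(Circle.exp (Real.pi / m), 1), ?_⟩
    simp [chi_apply, ← Circle.exp_zsmul, mul_div_cancel₀ _ hm']

/-- A nontrivial character has mean zero: translating by a point where it takes the value `-1`
changes the sign of its integral. -/
lemma integral_chi_eq_zero {m n : ℤ} (h : ¬(m = 0 ∧ n = 0)) : ∫ x, chi m n x ∂haarT2 = 0 := by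
  obtain ⟨g, hg⟩ := exists_chi_eq_neg_one h
  have h1 := integral_mul_left_eq_self (μ := haarT2) (fun x => chi m n x) g
  simp only [chi_mul_point, hg, neg_one_mul, integral_neg] at h1
  linear_combination (-1 / 2 : ℂ) * h1

/-- The average of `f` over the closed curve `θ ↦ (e^{iaθ}, e^{ibθ})`. -/
def curveAvg (a b : ℕ) (f : C(Circle × Circle, ℂ)) : ℂ :=
  (2 * Real.pi)⁻¹ • ∫ θ in (-Real.pi)..Real.pi,
    f (Circle.exp ((a : ℝ) * θ), Circle.exp ((b : ℝ) * θ))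

lemma curve_intervalIntegrable (a b : ℕ) (f : C(Circle × Circle, ℂ)) (s t : ℝ) :
    IntervalIntegrable (fun θ : ℝ => f (Circle.exp ((a : ℝ) * θ), Circle.exp ((b : ℝ) * θ)))
      volume s t := by
  apply Continuous.intervalIntegrable
  fun_prop

lemma curveAvg_add (a b : ℕ) (f g : C(Circle × Circle, ℂ)) :
    curveAvg a b (f + g) = curveAvg a b f + curveAvg a b g := by
  simp only [curveAvg, ContinuousMap.add_apply]
  rw [intervalIntegral.integral_add (curve_intervalIntegrable a b f _ _)
    (curve_intervalIntegrable a b g _ _), smul_add]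

lemma curveAvg_smul (a b : ℕ) (c : ℂ) (f : C(Circle × Circle, ℂ)) :
    curveAvg a b (c • f) = c • curveAvg a b f := by
  simp only [curveAvg, ContinuousMap.smul_apply]
  rw [intervalIntegral.integral_smul, smul_comm]

lemma norm_curveAvg_le (a b : ℕ) (f : C(Circle × Circle, ℂ)) : ‖curveAvg a b f‖ ≤ ‖f‖ := by
  have h := intervalIntegral.norm_integral_le_of_norm_le_const (a := -Real.pi) (b := Real.pi)
    (f := fun θ : ℝ => f (Circle.exp ((a : ℝ) * θ), Circle.exp ((b : ℝ) * θ))) (C := ‖f‖)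
    (fun θ _ => f.norm_coe_le_norm _)
  have hπ := Real.pi_pos
  rw [show Real.pi - -Real.pi = 2 * Real.pi by ring, abs_of_pos (by positivity)] at h
  rw [curveAvg, norm_smul, norm_inv, Real.norm_of_nonneg (by positivity),
    inv_mul_le_iff₀ (by positivity)]
  linarith

lemma curveAvg_chi_zero (a b : ℕ) : curveAvg a b (chi 0 0) = 1 := by
  have hπ : (Real.pi : ℂ) ≠ 0 := by exact_mod_cast Real.pi_ne_zero
  simp only [curveAvg, chi_zero, ContinuousMap.one_apply, intervalIntegral.integral_const,
    Complex.real_smul]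
  push_cast
  field_simp
  norm_num

lemma curveAvg_chi_eq_zero {a b : ℕ} {m n : ℤ} (h : (a : ℤ) * m + b * n ≠ 0) :
    curveAvg a b (chi m n) = 0 := by
  set k : ℤ := (a : ℤ) * m + b * n with hk
  have hc : (k : ℂ) * Complex.I ≠ 0 := by
    simpa using h
  have h1 : ∀ θ : ℝ, chi m n (Circle.exp ((a : ℝ) * θ), Circle.exp ((b : ℝ) * θ)) =
      Complex.exp ((k : ℂ) * Complex.I * θ) := by
    intro θ
    simp only [chi_apply, Circle.coe_zpow, Circle.coe_exp, ← Complex.exp_int_mul,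
      ← Complex.exp_add]
    congr 1
    rw [hk]
    push_cast
    ring
  have h2 : Complex.exp ((k : ℂ) * Complex.I * (Real.pi : ℝ)) =
      Complex.exp ((k : ℂ) * Complex.I * ((-Real.pi : ℝ) : ℂ)) := by
    rw [Complex.exp_eq_exp_iff_exists_int]
    exact ⟨k, by push_cast; ring⟩
  simp only [curveAvg, h1]
  rw [integral_exp_mul_complex hc, h2, sub_self, zero_div, smul_zero]

/-- The frequency `q_n a + p_n b` of the character `χ_{a,b}` along the `n`-th curve, divided by
`q_n`, tends to `a + α b`, which is nonzero because `α` is irrational. -/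
lemma eventually_freq_ne_zero {α : ℝ} (hirr : Irrational α) {p q : ℕ → ℕ} (hq : ∀ n, 0 < q n)
    (hlim : Tendsto (fun n => (p n : ℝ) / (q n : ℝ)) atTop (nhds α)) {a b : ℤ}
    (h : ¬(a = 0 ∧ b = 0)) : ∀ᶠ n in atTop, (q n : ℤ) * a + p n * b ≠ 0 := by
  have hne : (a : ℝ) + α * b ≠ 0 := by
    intro h0
    by_cases hb : b = 0
    · exact h ⟨by simpa [hb] using h0, hb⟩
    · exact ((hirr.mul_intCast hb).intCast_add a).ne_zero h0
  filter_upwards [((hlim.mul_const (b : ℝ)).const_add (a : ℝ)).eventually_ne hne] with n hn h0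
  have hqn : (q n : ℝ) ≠ 0 := by exact_mod_cast (hq n).ne'
  have h0' : (q n : ℝ) * a + p n * b = 0 := by exact_mod_cast h0
  apply hn
  field_simp
  linarith

/-- The trigonometric polynomials on the 2-torus, as a star subalgebra. -/
def trigSubalgebra : StarSubalgebra ℂ C(Circle × Circle, ℂ) where
  toSubalgebra := Algebra.adjoin ℂ (Set.range fun k : ℤ × ℤ => chi k.1 k.2)
  star_mem' := by
    change Algebra.adjoin ℂ (Set.range fun k : ℤ × ℤ => chi k.1 k.2) ≤
      star (Algebra.adjoin ℂ (Set.range fun k : ℤ × ℤ => chi k.1 k.2))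
    refine Algebra.adjoin_le ?_
    rintro - ⟨k, rfl⟩
    exact Algebra.subset_adjoin ⟨(-k.1, -k.2), (star_chi k.1 k.2).symm⟩

/-- The characters are closed under multiplication, so the algebra they generate is their linear
span. -/
lemma trigSubalgebra_toSubmodule : Subalgebra.toSubmodule trigSubalgebra.toSubalgebra =
    Submodule.span ℂ (Set.range fun k : ℤ × ℤ => chi k.1 k.2) := by
  apply Algebra.adjoin_eq_span_of_subset
  refine Set.Subset.trans (fun x hx => ?_) Submodule.subset_span
  refine Submonoid.closure_induction (fun _ => id) ⟨(0, 0), chi_zero⟩ ?_ hx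
  rintro _ _ _ _ ⟨k, rfl⟩ ⟨l, rfl⟩
  exact ⟨k + l, (chi_mul _ _ _ _).symm⟩

lemma trigSubalgebra_closure : trigSubalgebra.topologicalClosure = ⊤ := by
  apply ContinuousMap.starSubalgebra_topologicalClosure_eq_top_of_separatesPoints
  intro x y hxy
  by_cases h1 : x.1 = y.1
  · refine ⟨_, ⟨chi 0 1, Algebra.subset_adjoin ⟨(0, 1), rfl⟩, rfl⟩, fun h => hxy (Prod.ext h1 ?_)⟩
    exact Circle.ext (by simpa [chi_apply] using h)
  · refine ⟨_, ⟨chi 1 0, Algebra.subset_adjoin ⟨(1, 0), rfl⟩, rfl⟩, fun h => h1 ?_⟩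
    exact Circle.ext (by simpa [chi_apply] using h)

lemma integrable_haarT2 (f : C(Circle × Circle, ℂ)) : Integrable (fun x => f x) haarT2 :=
  f.continuous.integrable_of_hasCompactSupport (HasCompactSupport.of_compactSpace _)

lemma norm_integral_haarT2_le (f : C(Circle × Circle, ℂ)) : ‖∫ x, f x ∂haarT2‖ ≤ ‖f‖ := by
  simpa using norm_integral_le_of_norm_le_const (μ := haarT2)
    (Eventually.of_forall fun x => f.norm_coe_le_norm x)

lemma tendsto_curveAvg_of_mem_span {α : ℝ} (hirr : Irrational α) {p q : ℕ → ℕ}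
    (hq : ∀ n, 0 < q n) (hlim : Tendsto (fun n => (p n : ℝ) / (q n : ℝ)) atTop (nhds α))
    {f : C(Circle × Circle, ℂ)}
    (hf : f ∈ Submodule.span ℂ (Set.range fun k : ℤ × ℤ => chi k.1 k.2)) :
    Tendsto (fun n => curveAvg (q n) (p n) f) atTop (nhds (∫ x, f x ∂haarT2)) := by
  induction hf using Submodule.span_induction with
  | mem f hf =>
    obtain ⟨⟨a, b⟩, rfl⟩ := hf
    by_cases h : a = 0 ∧ b = 0
    · obtain ⟨rfl, rfl⟩ := h
      simp only [curveAvg_chi_zero]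
      simp [chi_zero]
    · simp only [integral_chi_eq_zero h]
      refine tendsto_const_nhds.congr' ?_
      filter_upwards [eventually_freq_ne_zero hirr hq hlim h] with n hn
      exact (curveAvg_chi_eq_zero hn).symm
  | zero => simp [curveAvg]
  | add f g _ _ hf hg =>
    simp only [curveAvg_add, ContinuousMap.add_apply]
    rw [integral_add (integrable_haarT2 f) (integrable_haarT2 g)]
    exact hf.add hg
  | smul c f _ hf =>
    simp only [curveAvg_smul, ContinuousMap.smul_apply]
    rw [integral_smul]
    exact hf.const_smul c

end Helpers

open Filter in
/-- Weak* convergence of the measures `μ_n(f) = (1/2π)∫_{-π}^{π} f(e^{iq_nθ}, e^{ip_nθ}) dθ`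
to the normalized Haar measure on the 2-torus, when `p_n/q_n → α` with `α` a positive
irrational. -/
theorem tendsto_circleAverages_haar
    (α : ℝ) (hα : 0 < α) (hirr : Irrational α)
    (p q : ℕ → ℕ) (hp : ∀ n, 0 < p n) (hq : ∀ n, 0 < q n)
    (hlim : Tendsto (fun n => (p n : ℝ) / (q n : ℝ)) atTop (nhds α))
    (f : C(Circle × Circle, ℂ)) :
    Tendsto
      (fun n => (2 * Real.pi)⁻¹ •
        ∫ θ in (-Real.pi)..Real.pi,
          f (Circle.exp ((q n : ℝ) * θ), Circle.exp ((p n : ℝ) * θ)))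
      atTop (nhds (∫ x, f x ∂haarT2)) := by
  change Tendsto (fun n => curveAvg (q n) (p n) f) atTop (nhds (∫ x, f x ∂haarT2))
  rw [Metric.tendsto_nhds]
  intro ε hε
  have hf : f ∈ closure (trigSubalgebra : Set C(Circle × Circle, ℂ)) := by
    rw [← StarSubalgebra.topologicalClosure_coe, trigSubalgebra_closure]
    trivial
  obtain ⟨g, hg, hfg⟩ := Metric.mem_closure_iff.1 hf (ε / 3) (by positivity)
  have hg' : g ∈ Submodule.span ℂ (Set.range fun k : ℤ × ℤ => chi k.1 k.2) := by
    rw [← trigSubalgebra_toSubmodule]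
    exact hg
  rw [dist_eq_norm] at hfg
  have hfd : f = g + (f - g) := by abel
  have hI : ∫ x, f x ∂haarT2 = ∫ x, g x ∂haarT2 + ∫ x, (f - g) x ∂haarT2 := by
    rw [← integral_add (integrable_haarT2 g) (integrable_haarT2 (f - g))]
    simp
  filter_upwards [Metric.tendsto_nhds.1 (tendsto_curveAvg_of_mem_span hirr hq hlim hg') (ε / 3)
    (by positivity)] with n hn
  have hA : curveAvg (q n) (p n) f =
      curveAvg (q n) (p n) g + curveAvg (q n) (p n) (f - g) := by
    rw [← curveAvg_add, ← hfd]
  rw [hI, hA]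
  calc _ ≤ _ := dist_add_add_le _ _ _ _
    _ ≤ dist (curveAvg (q n) (p n) g) (∫ x, g x ∂haarT2) + (‖f - g‖ + ‖f - g‖) := by
      rw [dist_eq_norm (curveAvg (q n) (p n) (f - g))]
      gcongr
      exact (norm_sub_le _ _).trans
        (add_le_add (norm_curveAvg_le _ _ _) (norm_integral_haarT2_le _))
    _ < ε := by linarith
end
end
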